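/- Let 1 ≤ m ≤ n, let φ be an alternating m-form on ℝ^n, let v₁,…,v_m ∈ ℝ^n be linearly independent with φ(v₁,…,v_m) = 1, set V = span{v₁,…,v_m}, and let W be the unique complementary subspace to V such that φ(v₁,…,v_{i−1}, w, v_{i+1},…,v_m) = 0 for every i ∈ {1,…,m} and w ∈ W. Let g be an inner product on ℝ^n for which V and W are orthogonal and Gram_g(v₁,…,v_m) = 1, and let K = sup{ φ(u₁,…,u_m) : u₁,…,u_m ∈ ℝ^n, Gram_g(u₁,…,u_m) = 1 } be the comass of φ with respect to g. Choose any constant C with C² > (n choose m)·K and define a new inner product g' on ℝ^n = V ⊕ W by g'(x,y) = g(x_V, y_V) + C²·g(x_W, y_W), where x = x_V + x_W with x_V ∈ V, x_W ∈ W. Then the comass of φ with respect to g' equals 1; moreover φ(v₁,…,v_m) = 1 = Gram_{g'}(v₁,…,v_m), so the comass is attained at (v₁,…,v_m). -/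

import Mathlib

/-- The Gram determinant of the vectors `v 0, …, v (m-1)` with respect to a
pairing `g` on `ℝ^n`. -/
noncomputable def gram {n m : ℕ} (g : (Fin n → ℝ) → (Fin n → ℝ) → ℝ)
    (v : Fin m → (Fin n → ℝ)) : ℝ :=
  (Matrix.of fun i j => g (v i) (v j)).det

/-- `g` is an inner product on `ℝ^n`: a symmetric bilinear form which is
positive definite. -/
def IsInnerProduct {n : ℕ} (g : (Fin n → ℝ) → (Fin n → ℝ) → ℝ) : Prop :=
  (∀ x y, g x y = g y x) ∧ (∀ x, IsLinearMap ℝ (g x)) ∧ ∀ v, v ≠ 0 → 0 < g v v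

theorem two_pow_le_choose_aux : ∀ r a b : ℕ, r ≤ a → r ≤ b → 2 ^ r ≤ (a + b).choose a := by
  intro r
  induction r with
  | zero => intro a b _ _; simpa using Nat.succ_le_of_lt (Nat.choose_pos (Nat.le_add_right a b))
  | succ r ih =>
    intro a b ha hb
    obtain ⟨a, rfl⟩ : ∃ k, a = k + 1 := ⟨a - 1, by omega⟩
    obtain ⟨b, rfl⟩ : ∃ k, b = k + 1 := ⟨b - 1, by omega⟩
    have h := ih a b (by omega) (by omega)
    have e : a + 1 + (b + 1) = (a + b + 1) + 1 := by ring
    rw [e, Nat.choose_succ_succ']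
    have h1 : (a + b).choose a ≤ (a + b + 1).choose a := Nat.choose_le_choose a (by omega)
    have h2 : (a + b).choose a ≤ (a + b + 1).choose (a + 1) := by
      rw [Nat.choose_succ_succ']; omega
    rw [pow_succ]
    omega

theorem two_pow_le_choose {n m r : ℕ} (hmn : m ≤ n) (h1 : r ≤ m) (h2 : r ≤ n - m) :
    2 ^ r ≤ n.choose m := by
  have := two_pow_le_choose_aux r m (n - m) h1 h2
  rwa [Nat.add_sub_cancel' hmn] at this

theorem basis_aux {E : Type*} [NormedAddCommGroup E] [InnerProductSpace ℝ E]
    [FiniteDimensional ℝ E] {m : ℕ} (U V : Submodule ℝ E) (hU : Module.finrank ℝ U = m) :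
    ∃ b : OrthonormalBasis (Fin m) ℝ U,
      ∃ T : Finset (Fin m), T.card ≤ Module.finrank ℝ E - Module.finrank ℝ V ∧
        ∀ i, i ∉ T → (b i : E) ∈ V := by
  classical
  set D : Submodule ℝ U := V.comap U.subtype with hD
  set d := Module.finrank ℝ D with hd
  have hdm : d ≤ m := by rw [← hU]; exact Submodule.finrank_le D
  have hDinf : d = Module.finrank ℝ (U ⊓ V : Submodule ℝ E) := by
    have : D.map U.subtype = U ⊓ V := by
      rw [hD, Submodule.map_comap_subtype]
    rw [← this, hd]
    exact (LinearEquiv.finrank_eq (Submodule.equivMapOfInjective _ U.injective_subtype D))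
  have hsum := Submodule.finrank_sup_add_finrank_inf_eq U V
  have hle : Module.finrank ℝ (U ⊔ V : Submodule ℝ E) ≤ Module.finrank ℝ E := Submodule.finrank_le _
  have hVle : Module.finrank ℝ V ≤ Module.finrank ℝ E := Submodule.finrank_le _
  let c : OrthonormalBasis (Fin d) ℝ D := stdOrthonormalBasis ℝ D
  let w : Fin m → U := fun i => if h : (i : ℕ) < d then (c ⟨i, h⟩ : U) else 0
  let s : Set (Fin m) := {i | (i : ℕ) < d}
  have hw : Orthonormal ℝ (s.domRestrict w) := by
    have hc : Orthonormal ℝ (fun i : s => c ⟨i.1, i.2⟩) :=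
      c.orthonormal.comp (fun i : s => (⟨i.1, i.2⟩ : Fin d)) (by
        intro i j h
        have := congrArg Fin.val h
        exact Subtype.ext (Fin.ext this))
    have hc2 := hc.comp_linearIsometry D.subtypeₗᵢ
    convert hc2 using 1
    funext i
    have hi : ((i : Fin m) : ℕ) < d := i.2
    change w i = _
    simp [w, hi]
  obtain ⟨b, hb⟩ := hw.exists_orthonormalBasis_extension_of_card_eq (by simpa using hU)
  refine ⟨b, Finset.univ.filter (fun i : Fin m => ¬ (i : ℕ) < d), ?_, ?_⟩
  · have h1 := Finset.card_filter_add_card_filter_not (s := (Finset.univ : Finset (Fin m)))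
      (fun i : Fin m => (i : ℕ) < d)
    have h2 : (Finset.univ.filter (fun i : Fin m => (i : ℕ) < d)).card = d := by
      rw [Fin.card_filter_val_lt]; omega
    rw [h2] at h1
    simp only [Finset.card_univ, Fintype.card_fin] at h1
    omega
  · intro i hi
    have hi : (i : ℕ) < d := by simpa using hi
    rw [hb i hi]
    have : w i = (c ⟨i, hi⟩ : U) := by simp [w, hi]
    rw [this]
    exact (c ⟨i, hi⟩).2

theorem det_aux {E : Type*} [NormedAddCommGroup E] [InnerProductSpace ℝ E]
    {m : ℕ} (U : Submodule ℝ E) (b : OrthonormalBasis (Fin m) ℝ U)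
    (x : Fin m → E) (hx : ∀ i, x i ∈ U) :
    ∃ d : ℝ, (∀ φ : E [⋀^Fin m]→ₗ[ℝ] ℝ, φ x = d * φ (fun i => (b i : E))) ∧
      d ^ 2 = (Matrix.of fun i j => inner ℝ (x i) (x j)).det ∧ |d| ≤ ∏ i, ‖x i‖ := by
  classical
  let y : Fin m → U := fun i => ⟨x i, hx i⟩
  refine ⟨b.toBasis.det y, ?_, ?_, ?_⟩
  · intro φ
    have h := AlternatingMap.eq_smul_basis_det (e := b.toBasis) (φ.compLinearMap U.subtype)
    have h2 := congrArg (fun f => f y) h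
    simp only [AlternatingMap.smul_apply, AlternatingMap.compLinearMap_apply, smul_eq_mul] at h2
    rw [mul_comm]
    have h3 : (fun i => U.subtype (b.toBasis i)) = fun i => (b i : E) := by
      funext i; simp
    rw [h3] at h2
    exact h2
  · rw [Module.Basis.det_apply, sq]
    nth_rw 1 [← Matrix.det_transpose]
    rw [← Matrix.det_mul]
    congr 1
    ext i j
    simp only [Matrix.mul_apply, Matrix.transpose_apply, Module.Basis.toMatrix_apply,
      Matrix.of_apply]
    have : inner ℝ (x i) (x j) = inner ℝ (y i) (y j) := rfl
    rw [this, ← b.sum_inner_mul_inner]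
    refine Finset.sum_congr rfl fun k _ => ?_
    simp [OrthonormalBasis.repr_apply_apply, real_inner_comm]
  · have : Fact (Module.finrank ℝ U = m) := ⟨by
      rw [Module.finrank_eq_card_basis b.toBasis]; simp⟩
    have h1 := b.toBasis.orientation.volumeForm_robust' b y
    rw [← h1]
    exact b.toBasis.orientation.abs_volumeForm_apply_le y

theorem core_equiv {F : Type*} [AddCommGroup F] [Module ℝ F] [FiniteDimensional ℝ F] {n : ℕ}
    (hfr : Module.finrank ℝ F = n) (core : InnerProductSpace.Core ℝ F) :
    ∃ e : F ≃ₗ[ℝ] EuclideanSpace ℝ (Fin n), ∀ x y, inner ℝ (e x) (e y) = core.inner x y := by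
  let i1 : NormedAddCommGroup F := core.toNormedAddCommGroup
  let i2 : InnerProductSpace ℝ F := InnerProductSpace.ofCore core.toCore
  let b := (stdOrthonormalBasis ℝ F).reindex (finCongr hfr)
  refine ⟨b.repr.toLinearEquiv, fun x y => ?_⟩
  exact b.repr.inner_map_map x y

theorem IsInnerProduct.exists_equiv {n : ℕ} {g : (Fin n → ℝ) → (Fin n → ℝ) → ℝ}
    (hg : IsInnerProduct g) :
    ∃ e : (Fin n → ℝ) ≃ₗ[ℝ] EuclideanSpace ℝ (Fin n), ∀ x y, inner ℝ (e x) (e y) = g x y := by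
  obtain ⟨hs, hl, hp⟩ := hg
  let core : InnerProductSpace.Core ℝ (Fin n → ℝ) :=
    { inner := g
      conj_inner_symm := fun x y => by simpa using hs y x
      re_inner_nonneg := fun x => by
        by_cases h : x = 0
        · subst h; simp [(hl 0).map_zero]
        · simpa using (hp x h).le
      add_left := fun x y z => by
        rw [hs, (hl z).map_add, hs z, hs z]
      smul_left := fun x y r => by
        rw [hs, (hl y).map_smul, hs y]; simp
      definite := fun x hx => by
        by_contra h
        exact absurd hx (hp x h).ne' }
  exact core_equiv (by simp) core

theorem key_basis {n m : ℕ} {g : (Fin n → ℝ) → (Fin n → ℝ) → ℝ} (hg : IsInnerProduct g)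
    (U V : Submodule ℝ (Fin n → ℝ)) (hU : Module.finrank ℝ U = m) :
    ∃ b : Fin m → (Fin n → ℝ), (∀ i, b i ∈ U) ∧ (∀ i, g (b i) (b i) = 1) ∧ gram g b = 1 ∧
      (∃ T : Finset (Fin m), T.card ≤ n - Module.finrank ℝ V ∧ ∀ i, i ∉ T → b i ∈ V) ∧
      ∀ x : Fin m → (Fin n → ℝ), (∀ i, x i ∈ U) → ∃ d : ℝ,
        (∀ φ : (Fin n → ℝ) [⋀^Fin m]→ₗ[ℝ] ℝ, φ x = d * φ b) ∧ d ^ 2 = gram g x ∧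
        |d| ≤ ∏ i, √(g (x i) (x i)) := by
  obtain ⟨e, he⟩ := hg.exists_equiv
  have hfr : ∀ X : Submodule ℝ (Fin n → ℝ),
      Module.finrank ℝ (X.map (e : (Fin n → ℝ) →ₗ[ℝ] EuclideanSpace ℝ (Fin n))) =
        Module.finrank ℝ X := fun X =>
    (Submodule.equivMapOfInjective (e : (Fin n → ℝ) →ₗ[ℝ] EuclideanSpace ℝ (Fin n))
      e.injective X).finrank_eq.symm
  obtain ⟨b, T, hT, hTV⟩ := basis_aux
    (U.map (e : (Fin n → ℝ) →ₗ[ℝ] EuclideanSpace ℝ (Fin n)))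
    (V.map (e : (Fin n → ℝ) →ₗ[ℝ] EuclideanSpace ℝ (Fin n)))
    (m := m) (by rw [hfr, hU])
  have hmem : ∀ (X : Submodule ℝ (Fin n → ℝ)) z, z ∈ X.map (e : (Fin n → ℝ) →ₗ[ℝ] _) →
      e.symm z ∈ X := by
    rintro X z ⟨w, hw, rfl⟩
    simpa using hw
  have hgb : ∀ i j, g (e.symm (b i)) (e.symm (b j)) = if i = j then 1 else 0 := by
    intro i j
    rw [← he]
    simp only [LinearEquiv.apply_symm_apply]
    have := orthonormal_iff_ite.1 b.orthonormal i j
    simpa using this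
  refine ⟨fun i => e.symm (b i), fun i => hmem _ _ (b i).2, fun i => by simp [hgb], ?_, ⟨T, ?_, ?_⟩, ?_⟩
  · unfold gram
    have : (Matrix.of fun i j => g (e.symm (b i)) (e.symm (b j))) = (1 : Matrix (Fin m) (Fin m) ℝ) := by
      ext i j; simp [hgb, Matrix.one_apply]
    rw [this, Matrix.det_one]
  · rw [hfr V] at hT
    simpa using hT
  · intro i hi
    exact hmem _ _ (hTV i hi)
  · intro x hx
    obtain ⟨d, h1, h2, h3⟩ := det_aux _ b (fun i => e (x i)) (fun i => ⟨x i, hx i, rfl⟩)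
    refine ⟨d, fun φ => ?_, ?_, ?_⟩
    · have := h1 (φ.compLinearMap (e.symm : _ →ₗ[ℝ] (Fin n → ℝ)))
      simpa [Function.comp_def, AlternatingMap.compLinearMap_apply] using this
    · rw [h2]; simp [gram, he]
    · refine h3.trans_eq (Finset.prod_congr rfl fun i _ => ?_)
      rw [← he, real_inner_self_eq_norm_sq, Real.sqrt_sq (norm_nonneg _)]

theorem phi_le {n m : ℕ} (hm : 1 ≤ m) {g : (Fin n → ℝ) → (Fin n → ℝ) → ℝ}
    (hg : IsInnerProduct g) (φ : (Fin n → ℝ) [⋀^Fin m]→ₗ[ℝ] ℝ) (K : ℝ) (hK0 : 0 ≤ K)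
    (hK : ∀ u, gram g u = 1 → φ u ≤ K) (x : Fin m → (Fin n → ℝ)) :
    |φ x| ≤ K * ∏ i, √(g (x i) (x i)) := by
  classical
  by_cases hx : LinearIndependent ℝ x
  · have hfr : Module.finrank ℝ (Submodule.span ℝ (Set.range x)) = m := by
      simpa using finrank_span_eq_card hx
    obtain ⟨b, hbU, -, hb1, -, hbd⟩ := key_basis hg _ ⊤ hfr
    obtain ⟨d, hd, -, hd2⟩ := hbd x (fun i => Submodule.subset_span ⟨i, rfl⟩)
    have hφb : |φ b| ≤ K := by
      rw [abs_le']
      refine ⟨hK b hb1, ?_⟩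
      by_cases h0 : φ b = 0
      · simpa [h0] using hK0
      let i0 : Fin m := ⟨0, hm⟩
      let y := Function.update b i0 (-b i0)
      have hy : φ y = -φ b := by
        simp only [y]
        rw [AlternatingMap.map_update_neg, Function.update_eq_self]
      obtain ⟨d', hd', hd'2, -⟩ := hbd y (fun i => by
        by_cases hi : i = i0
        · subst hi; simp only [y, Function.update_self]; exact Submodule.neg_mem _ (hbU _)
        · simp only [y, Function.update_of_ne hi]; exact hbU _)
      have : d' = -1 := by
        have h := hd' φ
        rw [hy] at h
        have : (d' + 1) * φ b = 0 := by linarith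
        rcases mul_eq_zero.1 this with h | h
        · linarith
        · exact absurd h h0
      rw [← hy]
      apply hK
      rw [← hd'2, this]; norm_num
    rw [hd φ, abs_mul, mul_comm]
    exact mul_le_mul hφb hd2 (abs_nonneg _) hK0
  · rw [AlternatingMap.map_linearDependent φ x hx, abs_zero]
    exact mul_nonneg hK0 (Finset.prod_nonneg fun i _ => Real.sqrt_nonneg _)

theorem phi_bdd {n m : ℕ} {g : (Fin n → ℝ) → (Fin n → ℝ) → ℝ}
    (hg : IsInnerProduct g) (φ : (Fin n → ℝ) [⋀^Fin m]→ₗ[ℝ] ℝ) :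
    BddAbove {r : ℝ | ∃ u : Fin m → (Fin n → ℝ), gram g u = 1 ∧ φ u = r} := by
  classical
  obtain ⟨e, he⟩ := hg.exists_equiv
  let f : Fin n → (Fin n → ℝ) := fun j => e.symm (EuclideanSpace.single j 1)
  refine ⟨∑ r : Fin m → Fin n, |φ (fun i => f (r i))|, ?_⟩
  rintro _ ⟨u, hu, rfl⟩
  by_cases hx : LinearIndependent ℝ u
  · have hfr : Module.finrank ℝ (Submodule.span ℝ (Set.range u)) = m := by
      simpa using finrank_span_eq_card hx
    obtain ⟨b, hbU, hbn, hb1, -, hbd⟩ := key_basis hg _ ⊤ hfr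
    obtain ⟨d, hd, hd1, -⟩ := hbd u (fun i => Submodule.subset_span ⟨i, rfl⟩)
    have hd' : |d| = 1 := by
      rw [hu] at hd1
      rw [← sq_abs] at hd1
      nlinarith [abs_nonneg d]
    have hbe : b = fun i => ∑ j, (e (b i) j) • f j := by
      funext i
      apply e.injective
      simp only [map_sum, map_smul, f, LinearEquiv.apply_symm_apply]
      ext k
      simp [Finset.sum_apply, Pi.single_apply]
    have hc : ∀ i j, |e (b i) j| ≤ 1 := by
      intro i j
      have h1 : ‖e (b i)‖ = 1 := by
        have h := he (b i) (b i)
        rw [hbn, real_inner_self_eq_norm_sq] at h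
        nlinarith [norm_nonneg (e (b i))]
      rw [← h1]
      exact PiLp.norm_apply_le (e (b i)) j
    have hφ : φ b = ∑ r : Fin m → Fin n, (∏ i, e (b i) (r i)) * φ (fun i => f (r i)) := by
      conv_lhs => rw [hbe]
      have := φ.toMultilinearMap.map_sum (fun i j => (e (b i) j) • f j)
      simp only [AlternatingMap.coe_multilinearMap] at this
      rw [this]
      refine Finset.sum_congr rfl fun r _ => ?_
      exact φ.map_smul_univ (fun i => e (b i) (r i)) (fun i => f (r i))
    calc φ u ≤ |φ u| := le_abs_self _
      _ = |φ b| := by rw [hd φ, abs_mul, hd', one_mul]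
      _ ≤ _ := by
        rw [hφ]
        refine (Finset.abs_sum_le_sum_abs _ _).trans (Finset.sum_le_sum fun r _ => ?_)
        rw [abs_mul, Finset.abs_prod]
        refine mul_le_of_le_one_left (abs_nonneg _) ?_
        exact Finset.prod_le_one (fun i _ => abs_nonneg _) (fun i _ => hc _ _)
  · rw [AlternatingMap.map_linearDependent φ u hx]
    exact Finset.sum_nonneg fun i _ => abs_nonneg _

theorem phi_van {n m : ℕ} (φ : (Fin n → ℝ) [⋀^Fin m]→ₗ[ℝ] ℝ)
    (v : Fin m → (Fin n → ℝ)) (hli : LinearIndependent ℝ v) (w : Fin n → ℝ)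
    (hw : ∀ i : Fin m, φ (Function.update v i w) = 0)
    (x : Fin m → (Fin n → ℝ)) (hx : ∀ i, x i ∈ Submodule.span ℝ (Set.range v)) (i : Fin m) :
    φ (Function.update x i w) = 0 := by
  classical
  obtain _ | k := m
  · exact i.elim0
  let B := Module.Basis.span hli
  have hB : ∀ i, (B i : Fin n → ℝ) = v i := fun i => congrArg Subtype.val (Module.Basis.span_apply hli i)
  let V := Submodule.span ℝ (Set.range v)
  have hψ : (φ.curryLeft w).compLinearMap V.subtype = 0 := by
    refine Module.Basis.ext_alternating B fun r hr => ?_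
    simp only [AlternatingMap.compLinearMap_apply, AlternatingMap.curryLeft_apply_apply,
      AlternatingMap.zero_apply]
    obtain ⟨i0, hi0⟩ : ∃ i0, i0 ∉ Set.range r := by
      by_contra! h
      have := Fintype.card_le_of_surjective r h
      simp at this
    have hinj : Function.Injective (Fin.cons i0 r : Fin (k+1) → Fin (k+1)) :=
      Fin.cons_injective_iff.2 ⟨hi0, hr⟩
    let σ : Equiv.Perm (Fin (k+1)) := Equiv.ofBijective _ (Finite.injective_iff_bijective.1 hinj)
    have h1 : (Matrix.vecCons w fun j => V.subtype (B (r j))) =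
        (Function.update v i0 w) ∘ σ := by
      funext j
      refine Fin.cases ?_ (fun j => ?_) j
      · simp [σ]
      · have : r j ≠ i0 := fun h => hi0 ⟨j, h⟩
        simp [σ, hB, Function.update_of_ne this]
    rw [h1, AlternatingMap.map_perm, hw, smul_zero]
  have h2 : Function.update x i w = i.insertNth w (i.removeNth x) := by
    rw [Fin.insertNth_removeNth]
  rw [h2, AlternatingMap.map_insertNth]
  have h3 := congrArg (fun f => f (fun j => (⟨i.removeNth x j, hx _⟩ : V))) hψ
  simp only [AlternatingMap.compLinearMap_apply, AlternatingMap.curryLeft_apply_apply,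
      AlternatingMap.zero_apply] at h3
  have h4 : φ (Matrix.vecCons w (i.removeNth x)) = 0 := h3
  rw [h4, smul_zero]

theorem gprime_inner {n : ℕ} {g g' : (Fin n → ℝ) → (Fin n → ℝ) → ℝ} (hg : IsInnerProduct g)
    (p : (Fin n → ℝ) →ₗ[ℝ] (Fin n → ℝ)) (C : ℝ) (hC : 0 < C ^ 2)
    (hg' : ∀ x y, g' x y = g (p x) (p y) + C ^ 2 * g (x - p x) (y - p y)) :
    IsInnerProduct g' := by
  obtain ⟨hs, hl, hp⟩ := hg
  have hnn : ∀ x, 0 ≤ g x x := by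
    intro x
    by_cases h : x = 0
    · subst h; simp [(hl 0).map_zero]
    · exact (hp x h).le
  refine ⟨fun x y => ?_, fun x => ⟨fun y z => ?_, fun c y => ?_⟩, fun x hx => ?_⟩
  · rw [hg', hg', hs (p x), hs (x - p x)]
  · have : y + z - p (y + z) = (y - p y) + (z - p z) := by rw [map_add]; abel
    rw [hg', hg', hg', this, map_add, (hl _).map_add, (hl _).map_add]; ring
  · have : c • y - p (c • y) = c • (y - p y) := by rw [map_smul, smul_sub]
    rw [hg', hg', this, map_smul, (hl _).map_smul, (hl _).map_smul]
    simp only [smul_eq_mul]; ring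
  · rw [hg']
    by_cases h : p x = 0
    · have h2 : x - p x ≠ 0 := by rw [h, sub_zero]; exact hx
      have := mul_pos hC (hp _ h2)
      linarith [hnn (p x)]
    · have := mul_nonneg hC.le (hnn (x - p x))
      linarith [hp _ h]

theorem sum_bound {m N : ℕ} (T : Finset (Fin m)) (hT : 2 ^ T.card ≤ N) (c s : Fin m → ℝ)
    (hc : ∀ i, 0 ≤ c i) (hs : ∀ i, 0 ≤ s i) (hcs : ∀ i, c i ^ 2 + s i ^ 2 = 1)
    (δ : ℝ) (hδ0 : 0 ≤ δ) (hδ : N * δ ≤ 1) (t : Finset (Fin m) → ℝ)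
    (h0 : t ∅ ≤ ∏ i, c i) (h1 : ∀ i, t {i} = 0) (hTz : ∀ S, ¬ S ⊆ T → t S = 0)
    (h2 : ∀ S : Finset (Fin m), 2 ≤ S.card → t S ≤ δ * ∏ i, if i ∈ S then s i else c i) :
    ∑ S : Finset (Fin m), t S ≤ 1 := by
  classical
  have hc1 : ∀ i, c i ≤ 1 := fun i => by nlinarith [hc i, hcs i, sq_nonneg (s i)]
  have hs1 : ∀ i, s i ≤ 1 := fun i => by nlinarith [hs i, hcs i, sq_nonneg (c i)]
  set Q := ∏ i, c i with hQ
  have hQ1 : Q ≤ 1 := Finset.prod_le_one (fun i _ => hc i) (fun i _ => hc1 i)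
  have two : ∀ (a : Fin m → ℝ), (∀ i, 0 ≤ a i) → (∀ i, a i ≤ 1) → ∀ i j, i ≠ j →
      ∏ k, a k ≤ a i * a j := by
    intro a ha ha1 i j hij
    rw [← Finset.prod_pair hij]
    exact Finset.prod_le_prod_of_subset_of_le_one (Finset.subset_univ _)
      (fun k _ => ha k) (fun k _ _ => ha1 k)
  have key : ∀ S : Finset (Fin m), S ≠ ∅ → t S ≤ δ * (1 - Q) := by
    intro S hS
    have hpos : 0 ≤ δ * (1 - Q) := mul_nonneg hδ0 (by linarith)
    rcases Nat.lt_or_ge S.card 2 with hlt | hge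
    · have : S.card = 1 := by
        have := Finset.card_pos.2 (Finset.nonempty_iff_ne_empty.2 hS)
        omega
      obtain ⟨i, rfl⟩ := Finset.card_eq_one.1 this
      rw [h1]; exact hpos
    · obtain ⟨i, hi, j, hj, hij⟩ := Finset.one_lt_card.1 hge
      refine (h2 S hge).trans (mul_le_mul_of_nonneg_left ?_ hδ0)
      have e1 := two (fun i => if i ∈ S then s i else c i)
        (fun i => by split_ifs <;> simp [hc, hs])
        (fun i => by split_ifs <;> simp [hc1, hs1]) i j hij
      simp only [hi, hj, if_true] at e1
      have e2 := two c hc hc1 i j hij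
      nlinarith [sq_nonneg (c i - c j), sq_nonneg (s i - s j), hcs i, hcs j]
  have hsum : ∑ S : Finset (Fin m), t S = ∑ S ∈ T.powerset, t S := by
    symm
    apply Finset.sum_subset (Finset.subset_univ _)
    intro S _ hS
    exact hTz S (by simpa using hS)
  rw [hsum, ← Finset.add_sum_erase _ _ (Finset.empty_mem_powerset T)]
  have hle : ∑ S ∈ T.powerset.erase ∅, t S ≤ (T.powerset.erase ∅).card • (δ * (1 - Q)) :=
    Finset.sum_le_card_nsmul _ _ _ (fun S hS => key S (Finset.ne_of_mem_erase hS))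
  have hcard : (T.powerset.erase ∅).card ≤ N := by
    refine (Finset.card_le_card (Finset.erase_subset _ _)).trans ?_
    rwa [Finset.card_powerset]
  have hcard' : ((T.powerset.erase ∅).card : ℝ) ≤ N := by exact_mod_cast hcard
  rw [nsmul_eq_mul] at hle
  have hpos : 0 ≤ δ * (1 - Q) := mul_nonneg hδ0 (by linarith)
  have h3 := mul_le_mul_of_nonneg_right hcard' hpos
  have h4 : (N : ℝ) * δ * (1 - Q) ≤ 1 * (1 - Q) :=
    mul_le_mul_of_nonneg_right hδ (by linarith)
  nlinarith

theorem main_bound {n m : ℕ} (hm : 1 ≤ m) (hmn : m ≤ n)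
    (φ : (Fin n → ℝ) [⋀^Fin m]→ₗ[ℝ] ℝ)
    (v : Fin m → (Fin n → ℝ)) (hli : LinearIndependent ℝ v) (hφv : φ v = 1)
    (W : Submodule ℝ (Fin n → ℝ))
    (hWvan : ∀ i : Fin m, ∀ w ∈ W, φ (Function.update v i w) = 0)
    (g : (Fin n → ℝ) → (Fin n → ℝ) → ℝ) (hg : IsInnerProduct g)
    (hgram : gram g v = 1)
    (K : ℝ) (hK1 : 1 ≤ K) (hK : ∀ u, gram g u = 1 → φ u ≤ K)
    (C : ℝ) (hC : (n.choose m : ℝ) * K < C ^ 2)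
    (g' : (Fin n → ℝ) → (Fin n → ℝ) → ℝ)
    (p : (Fin n → ℝ) →ₗ[ℝ] (Fin n → ℝ))
    (hpV : ∀ x, p x ∈ Submodule.span ℝ (Set.range v)) (hpW : ∀ x, x - p x ∈ W)
    (hpid : ∀ x ∈ Submodule.span ℝ (Set.range v), p x = x)
    (hg' : ∀ x y, g' x y = g (p x) (p y) + C ^ 2 * g (x - p x) (y - p y))
    (u : Fin m → (Fin n → ℝ)) (hu : gram g' u = 1) : φ u ≤ 1 := by
  classical
  have hN1 : (1 : ℝ) ≤ n.choose m := by exact_mod_cast Nat.choose_pos hmn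
  have hC1 : 1 < C ^ 2 := by nlinarith
  have hg'i : IsInnerProduct g' := gprime_inner hg p C (by linarith) hg'
  have hgz : g 0 0 = 0 := (hg.2.1 0).map_zero
  have hnn : ∀ x, 0 ≤ g x x := by
    intro x
    by_cases h : x = 0
    · subst h; rw [hgz]
    · exact (hg.2.2 x h).le
  have hVfr : Module.finrank ℝ (Submodule.span ℝ (Set.range v)) = m := by
    simpa using finrank_span_eq_card hli
  by_cases hx : LinearIndependent ℝ u
  swap
  · rw [AlternatingMap.map_linearDependent φ u hx]; exact zero_le_one
  have hfr : Module.finrank ℝ (Submodule.span ℝ (Set.range u)) = m := by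
    simpa using finrank_span_eq_card hx
  obtain ⟨b, hbU, hbn, hb1, ⟨T, hTc, hTV⟩, hbd⟩ :=
    key_basis hg'i _ (Submodule.span ℝ (Set.range v)) hfr
  rw [hVfr] at hTc
  obtain ⟨d, hd, hd1, -⟩ := hbd u (fun i => Submodule.subset_span ⟨i, rfl⟩)
  have hd' : |d| = 1 := by
    rw [hu, ← sq_abs] at hd1
    nlinarith [abs_nonneg d]
  have hφu : φ u ≤ |φ b| := by
    calc φ u ≤ |φ u| := le_abs_self _
      _ = |φ b| := by rw [hd φ, abs_mul, hd', one_mul]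
  refine hφu.trans ?_
  set A := |C| with hA
  have hA2 : A ^ 2 = C ^ 2 := sq_abs C
  have hA0 : 0 ≤ A := abs_nonneg C
  have hA1 : 1 < A := by nlinarith
  let c : Fin m → ℝ := fun i => √(g (p (b i)) (p (b i)))
  let s : Fin m → ℝ := fun i => A * √(g (b i - p (b i)) (b i - p (b i)))
  let t : Finset (Fin m) → ℝ := fun S => |φ (S.piecewise (fun i => b i - p (b i)) (fun i => p (b i)))|
  have hexp : φ b = ∑ S : Finset (Fin m),
      φ (S.piecewise (fun i => b i - p (b i)) (fun i => p (b i))) := by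
    rw [← AlternatingMap.map_add_univ]
    congr 1
    funext i
    simp
  have hφb : |φ b| ≤ ∑ S, t S := by
    rw [hexp]; exact Finset.abs_sum_le_sum_abs _ _
  refine hφb.trans ?_
  have hTm : T.card ≤ m := by simpa using Finset.card_le_univ T
  have hCpos : 0 < C ^ 2 := by linarith
  refine sum_bound (N := n.choose m) T (two_pow_le_choose hmn hTm hTc) c s
    (fun i => Real.sqrt_nonneg _) (fun i => mul_nonneg hA0 (Real.sqrt_nonneg _)) ?_
    (K / C ^ 2) (by positivity) ?_ t ?_ ?_ ?_ ?_
  · intro i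
    simp only [c, s]
    rw [mul_pow, Real.sq_sqrt (hnn _), Real.sq_sqrt (hnn _), hA2, ← hg', hbn]
  · rw [← mul_div_assoc, div_le_one hCpos]; exact hC.le
  · simp only [t, Finset.piecewise_empty, c]
    obtain ⟨bV, hbV, -, -, -, hbVd⟩ := key_basis hg (Submodule.span ℝ (Set.range v)) ⊤ hVfr
    obtain ⟨d1, hd1φ, hd1sq, -⟩ := hbVd v (fun i => Submodule.subset_span ⟨i, rfl⟩)
    obtain ⟨d2, hd2φ, -, hd2⟩ := hbVd (fun i => p (b i)) (fun i => hpV _)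
    rw [hgram] at hd1sq
    have e1 := hd1φ φ
    rw [hφv] at e1
    have e2 : |φ bV| = 1 := by
      have : |φ bV| ^ 2 = 1 := by
        rw [sq_abs]
        calc φ bV ^ 2 = d1 ^ 2 * φ bV ^ 2 := by rw [hd1sq, one_mul]
          _ = (d1 * φ bV) ^ 2 := by ring
          _ = 1 := by rw [← e1]; norm_num
      nlinarith [abs_nonneg (φ bV)]
    rw [hd2φ φ, abs_mul, e2, mul_one]
    exact hd2
  · intro i
    simp only [t, Finset.piecewise_singleton]
    rw [phi_van φ v hli _ (fun j => hWvan j _ (hpW (b i))) _ (fun j => hpV _), abs_zero]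
  · intro S hS
    obtain ⟨i, hiS, hiT⟩ := Finset.not_subset.1 hS
    simp only [t]
    rw [AlternatingMap.map_coord_zero φ i, abs_zero]
    rw [Finset.piecewise_eq_of_mem _ _ _ hiS, hpid _ (hTV i hiT), sub_self]
  · intro S hS
    refine (phi_le hm hg φ K (by linarith) hK _).trans ?_
    have e1 : ∀ i, √(g (S.piecewise (fun i => b i - p (b i)) (fun i => p (b i)) i)
        (S.piecewise (fun i => b i - p (b i)) (fun i => p (b i)) i)) =
        (if i ∈ S then A⁻¹ else 1) * (if i ∈ S then s i else c i) := by
      intro i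
      by_cases hi : i ∈ S
      · simp only [hi, Finset.piecewise_eq_of_mem, if_true, s]
        field_simp
      · simp [hi, c]
    have e2 : ∏ i : Fin m, (if i ∈ S then A⁻¹ else (1:ℝ)) = A⁻¹ ^ S.card := by
      rw [Finset.prod_ite_mem, Finset.univ_inter, Finset.prod_const]
    rw [Finset.prod_congr rfl (fun i _ => e1 i), Finset.prod_mul_distrib, e2, ← mul_assoc]
    refine mul_le_mul_of_nonneg_right ?_ (Finset.prod_nonneg fun i _ => ?_)
    · rw [div_eq_mul_inv, ← hA2, ← inv_pow]
      refine mul_le_mul_of_nonneg_left ?_ (by linarith)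
      exact pow_le_pow_of_le_one (by positivity) (inv_le_one_of_one_le₀ hA1.le) hS
    · split_ifs
      · exact mul_nonneg hA0 (Real.sqrt_nonneg _)
      · exact Real.sqrt_nonneg _

/-- Harvey–Lawson comass normalization: with `V = span{v₁,…,v_m}`, `W` the
unique complement on which `φ(v₁,…,v_{i-1},·,v_{i+1},…,v_m)` vanishes, and `g`
an inner product making `V ⊥ W` with `Gram_g(v₁,…,v_m) = 1`, let `K` be the
comass of `φ` with respect to `g`.  For any `C` with `C² > (n choose m) · K`,
the rescaled inner product `g'(x,y) = g(x_V,y_V) + C²·g(x_W,y_W)` gives `φ`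
comass exactly `1`, attained at `(v₁,…,v_m)`. -/
theorem stmt5 {n m : ℕ} (hm : 1 ≤ m) (hmn : m ≤ n)
    (φ : (Fin n → ℝ) [⋀^Fin m]→ₗ[ℝ] ℝ)
    (v : Fin m → (Fin n → ℝ)) (hli : LinearIndependent ℝ v) (hφv : φ v = 1)
    (W : Submodule ℝ (Fin n → ℝ))
    (hcompl : IsCompl (Submodule.span ℝ (Set.range v)) W)
    (hWvan : ∀ i : Fin m, ∀ w ∈ W, φ (Function.update v i w) = 0)
    (g : (Fin n → ℝ) → (Fin n → ℝ) → ℝ) (hg : IsInnerProduct g)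
    (horth : ∀ x ∈ Submodule.span ℝ (Set.range v), ∀ y ∈ W, g x y = 0)
    (hgram : gram g v = 1)
    (K : ℝ)
    (hK : K = sSup {r : ℝ | ∃ u : Fin m → (Fin n → ℝ), gram g u = 1 ∧ φ u = r})
    (C : ℝ) (hC : (n.choose m : ℝ) * K < C ^ 2)
    (g' : (Fin n → ℝ) → (Fin n → ℝ) → ℝ)
    (hg' : ∀ x y, g' x y =
      g ((Submodule.linearProjOfIsCompl (Submodule.span ℝ (Set.range v)) W hcompl x : Fin n → ℝ))
        ((Submodule.linearProjOfIsCompl (Submodule.span ℝ (Set.range v)) W hcompl y : Fin n → ℝ)) +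
      C ^ 2 *
        g (x - (Submodule.linearProjOfIsCompl (Submodule.span ℝ (Set.range v)) W hcompl x : Fin n → ℝ))
          (y - (Submodule.linearProjOfIsCompl (Submodule.span ℝ (Set.range v)) W hcompl y : Fin n → ℝ))) :
    sSup {r : ℝ | ∃ u : Fin m → (Fin n → ℝ), gram g' u = 1 ∧ φ u = r} = 1 ∧
      φ v = 1 ∧ gram g' v = 1 := by
  have hbdd := phi_bdd hg φ
  have hK' : ∀ u, gram g u = 1 → φ u ≤ K := fun u hu => by
    rw [hK]; exact le_csSup hbdd ⟨u, hu, rfl⟩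
  have hK1 : 1 ≤ K := by rw [← hφv]; exact hK' v hgram
  let p : (Fin n → ℝ) →ₗ[ℝ] (Fin n → ℝ) := (Submodule.span ℝ (Set.range v)).subtype ∘ₗ
    Submodule.projectionOnto (Submodule.span ℝ (Set.range v)) W hcompl
  have hpV : ∀ x, p x ∈ Submodule.span ℝ (Set.range v) := fun x => Subtype.prop _
  have hpid : ∀ x ∈ Submodule.span ℝ (Set.range v), p x = x := fun x hx =>
    congrArg Subtype.val (Submodule.projectionOnto_apply_left hcompl ⟨x, hx⟩)
  have hpW : ∀ x, x - p x ∈ W := by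
    intro x
    rw [← Submodule.ker_projectionOnto hcompl, LinearMap.mem_ker, map_sub, sub_eq_zero]
    apply Subtype.ext
    exact (hpid _ (hpV x)).symm
  have hg'p : ∀ x y, g' x y = g (p x) (p y) + C ^ 2 * g (x - p x) (y - p y) := hg'
  have hv' : gram g' v = 1 := by
    rw [← hgram]
    unfold gram
    congr 1
    ext i j
    have hz : g 0 0 = 0 := (hg.2.1 0).map_zero
    have hmem : ∀ i, v i ∈ Submodule.span ℝ (Set.range v) := fun i =>
      Submodule.subset_span ⟨i, rfl⟩
    simp only [Matrix.of_apply]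
    rw [hg'p, hpid _ (hmem i), hpid _ (hmem j), sub_self, sub_self, hz, mul_zero, add_zero]
  refine ⟨IsGreatest.csSup_eq ⟨⟨v, hv', hφv⟩, ?_⟩, hφv, hv'⟩
  rintro _ ⟨u, hu, rfl⟩
  exact main_bound hm hmn φ v hli hφv W hWvan g hg hgram K hK1 hK' C hC g' p hpV hpW hpid hg'p u hu
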